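/- arXiv:1604.08738 — 4 statements merged into one kernel-verified Lean document; each statement's English description precedes it below -/
import Mathlib

section
/- Let G be a finite simple graph in which every vertex has degree at least 1, and let D be the number of distinct values taken by the degree function of G. Then 4 · |E(G)| ≥ D · (D + 1), i.e., G has at least D(D+1)/4 edges. -/
/-!
By the handshake lemma `2 * |E(G)|` is the sum of all degrees, which is at least the sum of
the distinct degrees. These are `D` distinct positive integers, so their sum is at least
`1 + 2 + ⋯ + D = D * (D + 1) / 2` (`card_mul_succ_le_two_mul_sum`).
-/

theorem card_mul_succ_le_two_mul_sum (S : Finset ℕ) (hS : ∀ x ∈ S, 1 ≤ x) :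
    S.card * (S.card + 1) ≤ 2 * ∑ x ∈ S, x := by
  induction S using Finset.induction_on_max with
  | empty => simp
  | insert a s hlt ih =>
    have ha : a ∉ s := fun h => lt_irrefl a (hlt a h)
    have ih' := ih fun x hx => hS x (Finset.mem_insert_of_mem hx)
    have ha1 : 1 ≤ a := hS a (Finset.mem_insert_self a s)
    -- All elements of `s` lie strictly between `0` and the new maximum `a`.
    have hsub : s ⊆ Finset.Ioo 0 a := fun x hx =>
      Finset.mem_Ioo.2 ⟨hS x (Finset.mem_insert_of_mem hx), hlt x hx⟩
    have hcard : s.card + 1 ≤ a := by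
      have := Finset.card_le_card hsub
      rw [Nat.card_Ioo] at this
      omega
    rw [Finset.card_insert_of_notMem ha, Finset.sum_insert ha]
    nlinarith

/-- Let `G` be a finite simple graph in which every vertex has degree at least 1,
and let `D` be the number of distinct values of the degree function. Then
`4 · |E(G)| ≥ D · (D + 1)`. -/
theorem stmt2 {V : Type} [Fintype V] [DecidableEq V] (G : SimpleGraph V)
    [DecidableRel G.Adj] (hdeg : ∀ v : V, 1 ≤ G.degree v) :
    (Finset.univ.image fun v => G.degree v).card *
        ((Finset.univ.image fun v => G.degree v).card + 1) ≤
      4 * G.edgeFinset.card := by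
  have h1 := card_mul_succ_le_two_mul_sum (Finset.univ.image fun v => G.degree v) (by
    intro x hx
    obtain ⟨v, -, rfl⟩ := Finset.mem_image.1 hx
    exact hdeg v)
  have h2 : ∑ x ∈ Finset.univ.image (fun v => G.degree v), x ≤ ∑ v, G.degree v :=
    Finset.sum_image_le_of_nonneg (f := fun x => x) fun _ _ => Nat.zero_le _
  have h3 := G.sum_degrees_eq_twice_card_edges
  omega
end

section
/- Under the Configuration Model with m ≥ 2, the expected number of multi-edges, i.e., of unordered pairs {p, q} of two distinct pairs p, q ∈ M whose endpoint labels under ℓ form the same unordered pair {u, w} of two distinct vertices u ≠ w, is at most (1/2) · (⟨D²⟩ − ⟨D⟩)² / ((⟨D⟩ − 1/n)(⟨D⟩ − 3/n)). -/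
/-!
The expectation is computed by linearity. Twice the number of two-element subsets of
`{x | ℓ x = u ∧ ℓ (f x) = w}` is its number of ordered pairs `(x, y)` of distinct stubs, and
recording `(a, b) = (f x, f y)` turns the count into a sum, over ordered pairs of distinct stubs
`x, y` at `u` and `a, b` at `w`, of the events `f x = a ∧ f y = b`.

For four distinct stubs this event has probability `1 / ((2m - 1) (2m - 3))`
(`card_pair_event`): conjugating matchings by a transposition of two stubs shows that all admissible
partners of a stub are equally likely, first for `x` (`2m - 1` choices), then for `y` given the
partner of `x` (`2m - 3` choices). Hence the expectation equals
`(1/4) ∑_{u ≠ w} d(u) (d(u) - 1) d(w) (d(w) - 1) / ((2m - 1) (2m - 3))`, and including the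
diagonal terms `u = w` gives the bound, even with `1/4` in place of `1/2`.
-/

open Finset

/-- Perfect matchings of `S`, encoded as fixed-point-free involutions. -/
def matchings (S : Type) [Fintype S] [DecidableEq S] : Finset (S → S) :=
  Finset.univ.filter fun f => (∀ x, f (f x) = x) ∧ ∀ x, f x ≠ x

lemma mem_matchings {S : Type} [Fintype S] [DecidableEq S] {f : S → S} :
    f ∈ matchings S ↔ (∀ x, f (f x) = x) ∧ ∀ x, f x ≠ x := by
  simp [matchings]

/-- The law of a uniform matching is invariant under conjugation by a permutation of the stubs. -/
lemma card_event_conj {S : Type} [Fintype S] [DecidableEq S] (σ : Equiv.Perm S) (x y a b : S) :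
    #{f ∈ matchings S | f x = a ∧ f y = b} =
      #{f ∈ matchings S | f (σ x) = σ a ∧ f (σ y) = σ b} := by
  refine Finset.card_nbij' (fun f s => σ (f (σ.symm s))) (fun f s => σ.symm (f (σ s)))
    ?_ ?_ ?_ ?_
  · intro f hf
    simp only [coe_filter, mem_matchings, Set.mem_ofPred_eq] at hf ⊢
    obtain ⟨⟨h1, h2⟩, h3, h4⟩ := hf
    refine ⟨⟨fun s => by simp [h1], fun s hs => h2 (σ.symm s) ?_⟩, by simp [h3], by simp [h4]⟩
    rw [Equiv.eq_symm_apply]; exact hs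
  · intro f hf
    simp only [coe_filter, mem_matchings, Set.mem_ofPred_eq] at hf ⊢
    obtain ⟨⟨h1, h2⟩, h3, h4⟩ := hf
    refine ⟨⟨fun s => by simp [h1], fun s hs => h2 (σ s) ?_⟩, by simp [h3], by simp [h4]⟩
    rw [Equiv.symm_apply_eq] at hs; exact hs
  · intro f _; funext s; simp
  · intro f _; funext s; simp

lemma card_matchings_eq {S : Type} [Fintype S] [DecidableEq S] {x a : S} (hxa : x ≠ a) :
    #(matchings S) = (Fintype.card S - 1) * #{f ∈ matchings S | f x = a} := by
  have key : ∀ a' ∈ univ.erase x,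
      #{f ∈ matchings S | f x = a'} = #{f ∈ matchings S | f x = a} := by
    intro a' ha'
    have hne : x ≠ a' := by simpa [eq_comm] using ha'
    have h := card_event_conj (Equiv.swap a' a) x x a' a'
    simpa [Equiv.swap_apply_of_ne_of_ne hne hxa] using h
  rw [Finset.card_eq_sum_card_fiberwise (f := fun f => f x) (t := univ.erase x),
    Finset.sum_congr rfl key]
  · simp [Finset.card_erase_of_mem]
  · intro f hf
    have := (mem_matchings.1 hf).2 x
    simpa using this

lemma card_single_event_eq {S : Type} [Fintype S] [DecidableEq S] {x y a b : S}
    (hxy : x ≠ y) (hxa : x ≠ a) (hxb : x ≠ b) (hya : y ≠ a) (hyb : y ≠ b) (hab : a ≠ b) :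
    #{f ∈ matchings S | f x = a} =
      (Fintype.card S - 3) * #{f ∈ matchings S | f x = a ∧ f y = b} := by
  have key : ∀ b' ∈ univ \ ({x, y, a} : Finset S),
      #{f ∈ {f ∈ matchings S | f x = a} | f y = b'} =
        #{f ∈ matchings S | f x = a ∧ f y = b} := by
    intro b' hb'
    simp only [mem_sdiff, mem_univ, mem_insert, mem_singleton, not_or, true_and] at hb'
    obtain ⟨h1, h2, h3⟩ := hb'
    have h := card_event_conj (Equiv.swap b' b) x y a b'
    rw [Finset.filter_filter]
    simpa [Equiv.swap_apply_of_ne_of_ne (Ne.symm h1) hxb,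
      Equiv.swap_apply_of_ne_of_ne (Ne.symm h2) hyb,
      Equiv.swap_apply_of_ne_of_ne (Ne.symm h3) hab] using h
  rw [Finset.card_eq_sum_card_fiberwise (f := fun f => f y) (t := univ \ {x, y, a}),
    Finset.sum_congr rfl key]
  · rw [Finset.sum_const, smul_eq_mul, Finset.card_sdiff_of_subset (Finset.subset_univ _),
      Finset.card_univ, Finset.card_eq_three.2 ⟨x, y, a, hxy, hxa, hya, rfl⟩]
  · intro f hf
    simp only [coe_filter, mem_matchings, Set.mem_ofPred_eq] at hf
    obtain ⟨⟨h1, h2⟩, h3⟩ := hf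
    simp only [coe_sdiff, coe_univ, coe_insert, coe_singleton, Set.mem_sdiff, Set.mem_univ,
      Set.mem_insert_iff, Set.mem_singleton_iff, not_or, true_and]
    refine ⟨fun h => hya ?_, h2 y, fun h => hxy ?_⟩
    · rw [← h1 y, h, h3]
    · rw [← h1 x, ← h1 y, h, h3]

/-- Two prescribed disjoint pairs both occur with probability `1 / ((|S| - 1) (|S| - 3))`. -/
lemma card_pair_event {S : Type} [Fintype S] [DecidableEq S] {x y a b : S}
    (hxy : x ≠ y) (hxa : x ≠ a) (hxb : x ≠ b) (hya : y ≠ a) (hyb : y ≠ b) (hab : a ≠ b) :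
    #(matchings S) = (Fintype.card S - 1) * (Fintype.card S - 3) *
      #{f ∈ matchings S | f x = a ∧ f y = b} := by
  rw [card_matchings_eq hxa, card_single_event_eq hxy hxa hxb hya hyb hab, mul_assoc]

/-- Double counting: an ordered pair of distinct parallel edges of `f` from `A` to `B` is given by
its endpoints `x ≠ y` in `A` and `a ≠ b` in `B`. -/
lemma sum_offDiag_card {S : Type} [Fintype S] [DecidableEq S] (A B : Finset S) :
    ∑ f ∈ matchings S, #({x | x ∈ A ∧ f x ∈ B} : Finset S).offDiag =
      ∑ p ∈ A.offDiag, ∑ q ∈ B.offDiag, #{f ∈ matchings S | f p.1 = q.1 ∧ f p.2 = q.2} := by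
  have hswap : ∑ p ∈ A.offDiag, ∑ q ∈ B.offDiag,
        #{f ∈ matchings S | f p.1 = q.1 ∧ f p.2 = q.2} =
      ∑ f ∈ matchings S, ∑ p ∈ A.offDiag, ∑ q ∈ B.offDiag,
        if f p.1 = q.1 ∧ f p.2 = q.2 then 1 else 0 := by
    simp_rw [Finset.card_filter]
    rw [Finset.sum_comm (s := matchings S)]
    exact Finset.sum_congr rfl fun p _ => Finset.sum_comm
  rw [hswap]
  refine Finset.sum_congr rfl fun f hf => ?_
  have hinj : Function.Injective f :=
    Function.LeftInverse.injective (mem_matchings.1 hf).1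
  have hset : ({x | x ∈ A ∧ f x ∈ B} : Finset S).offDiag =
      {p ∈ A.offDiag | (f p.1, f p.2) ∈ B.offDiag} := by
    ext ⟨x, y⟩
    simp only [mem_offDiag, mem_filter, mem_univ, true_and, ne_eq, hinj.eq_iff]
    tauto
  rw [hset, Finset.card_filter]
  refine Finset.sum_congr rfl fun p _ => ?_
  have : ∀ q : S × S, (f p.1 = q.1 ∧ f p.2 = q.2) ↔ (f p.1, f p.2) = q := by
    intro q; rw [Prod.ext_iff]
  simp_rw [this, Finset.sum_ite_eq]

/-- The exact second factorial moment of the number of edges between two distinct vertices, with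
denominators cleared. -/
lemma sum_choose_eq {V S : Type} [Fintype V] [Fintype S] [DecidableEq V] [DecidableEq S]
    (ℓ : S → V) {u w : V} (huw : u ≠ w) :
    (Fintype.card S - 1) * (Fintype.card S - 3) *
      ∑ f ∈ matchings S, 2 * (#{x | ℓ x = u ∧ ℓ (f x) = w}).choose 2 =
    #(matchings S) * (#({x | ℓ x = u} : Finset S).offDiag *
      #({x | ℓ x = w} : Finset S).offDiag) := by
  have h2 : ∀ s : Finset S, 2 * (#s).choose 2 = #s.offDiag := by
    intro s
    rw [Nat.choose_two_right, Finset.offDiag_card,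
      Nat.mul_div_cancel' (Nat.even_mul_pred_self _).two_dvd, Nat.mul_sub, mul_one]
  simp_rw [h2]
  have h := sum_offDiag_card ({x | ℓ x = u} : Finset S) ({x | ℓ x = w} : Finset S)
  simp only [mem_filter, mem_univ, true_and] at h
  rw [h, Finset.mul_sum, Finset.card_eq_sum_ones (offDiag _), Finset.sum_mul, Finset.mul_sum]
  refine Finset.sum_congr rfl fun p hp => ?_
  rw [Finset.mul_sum, one_mul, Finset.card_eq_sum_ones (offDiag _), Finset.mul_sum]
  refine Finset.sum_congr rfl fun q hq => ?_
  simp only [mem_offDiag, mem_filter, mem_univ, true_and] at hp hq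
  obtain ⟨hp1, hp2, hp⟩ := hp
  obtain ⟨hq1, hq2, hq⟩ := hq
  rw [mul_one]
  refine (card_pair_event hp ?_ ?_ ?_ ?_ hq).symm <;> rintro h <;> apply huw
  · rw [← hp1, ← hq1, h]
  · rw [← hp1, ← hq2, h]
  · rw [← hp2, ← hq1, h]
  · rw [← hp2, ← hq2, h]

/-- Configuration model with `m ≥ 2`: perfect matchings of the stub set `S` are
encoded as fixed-point-free involutions `f : S → S`. The number of multi-edges
of a matching `f` (unordered pairs of two distinct matching pairs whose label
sets are the same pair `{u, w}` with `u ≠ w`) is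
`(1/2) · ∑_{(u,w), u ≠ w} choose (k_{u,w} f) 2`, where
`k_{u,w} f = |{x | ℓ x = u ∧ ℓ (f x) = w}|` (each unordered vertex pair is
counted for both orders, whence the factor `1/2`). Its expectation is at most
`(1/2) (⟨D²⟩ − ⟨D⟩)² / ((⟨D⟩ − 1/n)(⟨D⟩ − 3/n))`. -/
theorem stmt8 {V S : Type} [Fintype V] [Fintype S] [DecidableEq V] [DecidableEq S]
    (n m : ℕ) (hn : 1 ≤ n) (hm : 2 ≤ m)
    (hV : Fintype.card V = n) (hS : Fintype.card S = 2 * m)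
    (ℓ : S → V) (d : V → ℕ)
    (hd : ∀ v : V, d v = (Finset.univ.filter fun x => ℓ x = v).card)
    (hsum : ∑ v : V, d v = 2 * m) :
    let PM : Finset (S → S) :=
      Finset.univ.filter fun f => (∀ x, f (f x) = x) ∧ ∀ x, f x ≠ x
    let momD : ℝ := (∑ v : V, (d v : ℝ)) / n
    let momD2 : ℝ := (∑ v : V, (d v : ℝ) ^ 2) / n
    (∑ f ∈ PM,
        (∑ p ∈ (Finset.univ : Finset V).offDiag,
          (((Finset.univ.filter fun x =>
              ℓ x = p.1 ∧ ℓ (f x) = p.2).card.choose 2 : ℕ) : ℝ)) / 2) /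
        (PM.card : ℝ) ≤
      (1 / 2) * (momD2 - momD) ^ 2 / ((momD - 1 / n) * (momD - 3 / n)) := by
  intro PM momD momD2
  have hn0 : (0 : ℝ) < n := by exact_mod_cast hn
  have hm2 : (2 : ℝ) ≤ m := by exact_mod_cast hm
  set T : ℝ := ∑ v : V, ((d v : ℝ) ^ 2 - d v) with hT
  set K : ℝ := (2 * m - 1) * (2 * m - 3) with hK
  have hKpos : 0 < K := mul_pos (by linarith) (by linarith)
  have hsumR : ∑ v : V, (d v : ℝ) = 2 * m := by exact_mod_cast hsum
  have hrhs : (1 / 2) * (momD2 - momD) ^ 2 / ((momD - 1 / n) * (momD - 3 / n)) =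
      (1 / 2) * T ^ 2 / K := by
    have e1 : momD2 - momD = T / n := by
      simp only [momD2, momD, hT, Finset.sum_sub_distrib, sub_div]
    have e2 : (momD - 1 / n) * (momD - 3 / n) = K / n ^ 2 := by
      simp only [momD, hsumR, hK]
      field_simp
    rw [e1, e2]
    field_simp
  have hmoment : ∀ p ∈ (Finset.univ : Finset V).offDiag,
      K * ∑ f ∈ PM, (((Finset.univ.filter fun x =>
              ℓ x = p.1 ∧ ℓ (f x) = p.2).card.choose 2 : ℕ) : ℝ) =
        (PM.card : ℝ) / 2 * (((d p.1 : ℝ) ^ 2 - d p.1) * ((d p.2 : ℝ) ^ 2 - d p.2)) := by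
    intro p hp
    have h := congrArg (Nat.cast (R := ℝ)) (sum_choose_eq ℓ (mem_offDiag.1 hp).2.2)
    have hoff : ∀ v : V, ((#({x | ℓ x = v} : Finset S).offDiag : ℕ) : ℝ) =
        (d v : ℝ) ^ 2 - d v := by
      intro v
      rw [Finset.offDiag_card, ← hd v, Nat.cast_sub (Nat.le_mul_self _)]
      push_cast
      ring
    rw [Nat.cast_mul, Nat.cast_mul, Nat.cast_mul, Nat.cast_mul, hoff, hoff, hS,
      Nat.cast_sub (by omega), Nat.cast_sub (by omega), ← Finset.mul_sum] at h
    push_cast at h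
    change _ = (PM.card : ℝ) * _ at h
    change _ * (2 * ∑ f ∈ PM, _) = _ at h
    rw [hK]
    linarith
  have hTnonneg : ∀ v : V, 0 ≤ (d v : ℝ) ^ 2 - d v := by
    intro v
    have : ((d v : ℕ) : ℝ) ≤ ((d v * d v : ℕ) : ℝ) := by exact_mod_cast Nat.le_mul_self _
    push_cast at this
    nlinarith
  have hoffle : ∑ p ∈ (Finset.univ : Finset V).offDiag,
      (((d p.1 : ℝ) ^ 2 - d p.1) * ((d p.2 : ℝ) ^ 2 - d p.2)) ≤ T ^ 2 := by
    rw [sq T, hT, Finset.sum_mul_sum, ← Finset.sum_product']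
    refine Finset.sum_le_sum_of_subset_of_nonneg (fun p _ => by simp) fun p _ _ =>
      mul_nonneg (hTnonneg _) (hTnonneg _)
  have hmain : K * (∑ f ∈ PM,
        (∑ p ∈ (Finset.univ : Finset V).offDiag,
          (((Finset.univ.filter fun x =>
              ℓ x = p.1 ∧ ℓ (f x) = p.2).card.choose 2 : ℕ) : ℝ)) / 2) ≤
      (PM.card : ℝ) / 4 * T ^ 2 := by
    rw [← Finset.sum_div, Finset.sum_comm, ← mul_div_assoc, Finset.mul_sum,
      Finset.sum_congr rfl hmoment, ← Finset.mul_sum]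
    have := mul_le_mul_of_nonneg_left hoffle (by positivity : (0 : ℝ) ≤ (PM.card : ℝ) / 4)
    linarith
  rw [hrhs]
  refine div_le_of_le_mul₀ (by positivity) (by positivity) ?_
  rw [div_mul_eq_mul_div, le_div_iff₀ hKpos]
  have : 0 ≤ (PM.card : ℝ) * T ^ 2 := by positivity
  linarith
end

section
/- Let 1 ≤ a ≤ b be integers and let X be an integer random variable with P[X = k] = k^{−2}/Z for a ≤ k ≤ b, where Z = Σ_{i=a}^{b} i^{−2}. Then (E[X²] − E[X]) / (2 E[X]) ≤ (b − a + 1) / (2 (ln(b + 1) − ln(a))). (This is the bound underlying the paper's estimate on the expected number of self-loops of the Configuration Model applied to a powerlaw degree sequence with exponent 2.) -/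
open MeasureTheory

/-!
Writing `n = b - a + 1`, `H = ∑_{k=a}^{b} 1/k` and `Z = ∑_{k=a}^{b} 1/k²`, the law of `X` gives
`E[X²] = n / Z` and `E[X] = H / Z`, so the left-hand side is `(n - H) / (2H) ≤ n / (2H)`.
The claim follows from `log (b + 1) - log a ≤ H`, a telescoping sum of
`log (k + 1) - log k ≤ 1 / k`.
-/

/-- Expectation of a function of an `ℕ`-valued random variable whose law is carried by a finite
set `s` with real weights `p`. -/
lemma integral_comp_eq_sum {Ω : Type} [MeasurableSpace Ω] (μ : Measure Ω) [IsProbabilityMeasure μ]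
    (X : Ω → ℕ) (hmX : Measurable X) (s : Finset ℕ) (p : ℕ → ℝ) (hp : ∀ k, 0 ≤ p k)
    (hX : ∀ k : ℕ, μ {ω | X ω = k} = if k ∈ s then ENNReal.ofReal (p k) else 0) (f : ℕ → ℝ) :
    ∫ ω, f (X ω) ∂μ = ∑ k ∈ s, p k * f k := by
  have hmap : ∀ k, (μ.map X) {k} = if k ∈ s then ENNReal.ofReal (p k) else 0 := by
    intro k
    rw [Measure.map_apply hmX (measurableSet_singleton k), ← hX k]
    rfl
  have : IsProbabilityMeasure (μ.map X) := Measure.isProbabilityMeasure_map hmX.aemeasurable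
  have hae : ∀ᵐ k ∂(μ.map X), k ∈ (s : Set ℕ) := by
    rw [ae_iff_of_countable]
    intro k hk
    by_contra h
    exact hk (by rw [hmap, if_neg (by simpa using h)])
  rw [← integral_map hmX.aemeasurable (f := f) (by fun_prop),
    ← Measure.restrict_eq_self_of_ae_mem hae, setIntegral_finset _ IntegrableOn.finset]
  refine Finset.sum_congr rfl fun k hk => ?_
  rw [Measure.real, hmap, if_pos hk, ENNReal.toReal_ofReal (hp k), smul_eq_mul]

lemma log_sub_log_le_sum_inv (a b : ℕ) (ha : 1 ≤ a) (hab : a ≤ b) :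
    Real.log ((b : ℝ) + 1) - Real.log (a : ℝ) ≤ ∑ k ∈ Finset.Icc a b, (k : ℝ)⁻¹ := by
  have step : ∀ k : ℕ, 1 ≤ k → Real.log ((k : ℝ) + 1) - Real.log k ≤ (k : ℝ)⁻¹ := by
    intro k hk
    have hk0 : (0 : ℝ) < k := by exact_mod_cast hk
    rw [← Real.log_div (by positivity) hk0.ne']
    refine (Real.log_le_sub_one_of_pos (by positivity)).trans (le_of_eq ?_)
    field_simp
    ring
  induction b, hab using Nat.le_induction with
  | base => simpa using step a ha
  | succ b hb ih =>
    rw [Finset.sum_Icc_succ_top (by omega)]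
    have := step (b + 1) (by omega)
    push_cast at this ⊢
    linarith

/-- Let `1 ≤ a ≤ b` and let `X` be an integer random variable with
`P[X = k] = k⁻²/Z` for `a ≤ k ≤ b`, where `Z = Σ_{i=a}^{b} i⁻²`. Then
`(E[X²] − E[X]) / (2 E[X]) ≤ (b − a + 1) / (2 (ln(b + 1) − ln a))`. -/
theorem stmt11 (a b : ℕ) (ha : 1 ≤ a) (hab : a ≤ b)
    (Ω : Type) [MeasurableSpace Ω] (μ : Measure Ω) [IsProbabilityMeasure μ]
    (X : Ω → ℕ) (hmX : Measurable X)
    (hX : ∀ k : ℕ, μ {ω | X ω = k} =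
      if k ∈ Finset.Icc a b then
        ENNReal.ofReal
          (((k : ℝ) ^ 2)⁻¹ / ∑ i ∈ Finset.Icc a b, ((i : ℝ) ^ 2)⁻¹)
      else 0) :
    ((∫ ω, ((X ω : ℝ)) ^ 2 ∂μ) - ∫ ω, (X ω : ℝ) ∂μ) /
        (2 * ∫ ω, (X ω : ℝ) ∂μ) ≤
      ((b : ℝ) - (a : ℝ) + 1) /
        (2 * (Real.log ((b : ℝ) + 1) - Real.log (a : ℝ))) := by
  have hpos : ∀ k ∈ Finset.Icc a b, (0 : ℝ) < k := fun k hk => by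
    exact_mod_cast ha.trans (Finset.mem_Icc.mp hk).1
  have hne : (Finset.Icc a b).Nonempty := Finset.nonempty_Icc.mpr hab
  have hL : 0 < Real.log ((b : ℝ) + 1) - Real.log (a : ℝ) := by
    refine sub_pos.mpr (Real.log_lt_log (by exact_mod_cast ha) ?_)
    exact_mod_cast Nat.lt_succ_of_le hab
  have hLH := log_sub_log_le_sum_inv a b ha hab
  have hZ : 0 < ∑ i ∈ Finset.Icc a b, ((i : ℝ) ^ 2)⁻¹ :=
    Finset.sum_pos (fun k hk => by have := hpos k hk; positivity) hne
  have key := integral_comp_eq_sum μ X hmX (Finset.Icc a b)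
    (fun k => ((k : ℝ) ^ 2)⁻¹ / ∑ i ∈ Finset.Icc a b, ((i : ℝ) ^ 2)⁻¹)
    (fun k => by positivity) hX
  have h1 := key (fun k => (k : ℝ))
  have h2 := key (fun k => (k : ℝ) ^ 2)
  rw [h1, h2]
  clear h1 h2 key hX
  generalize (∑ i ∈ Finset.Icc a b, ((i : ℝ) ^ 2)⁻¹) = Z at hZ ⊢
  have e1 : ∑ k ∈ Finset.Icc a b, ((k : ℝ) ^ 2)⁻¹ / Z * (k : ℝ) =
      (∑ k ∈ Finset.Icc a b, (k : ℝ)⁻¹) / Z := by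
    rw [Finset.sum_div]
    refine Finset.sum_congr rfl fun k hk => ?_
    have := hpos k hk
    field_simp
  have e2 : ∑ k ∈ Finset.Icc a b, ((k : ℝ) ^ 2)⁻¹ / Z * (k : ℝ) ^ 2 =
      ((b : ℝ) - a + 1) / Z := by
    have hterm : ∀ k ∈ Finset.Icc a b, ((k : ℝ) ^ 2)⁻¹ / Z * (k : ℝ) ^ 2 = 1 / Z := by
      intro k hk
      have := hpos k hk
      field_simp
    rw [Finset.sum_congr rfl hterm, Finset.sum_const, Nat.card_Icc, nsmul_eq_mul,
      Nat.cast_sub (by omega)]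
    push_cast
    ring
  rw [e1, e2]
  generalize (∑ k ∈ Finset.Icc a b, (k : ℝ)⁻¹) = H at hLH ⊢
  have hH : 0 < H := hL.trans_le hLH
  have hn : (0 : ℝ) ≤ (b : ℝ) - a + 1 := by
    have : (a : ℝ) ≤ b := by exact_mod_cast hab
    linarith
  calc (((b : ℝ) - a + 1) / Z - H / Z) / (2 * (H / Z))
      = (((b : ℝ) - a + 1) - H) / (2 * H) := by field_simp
    _ ≤ ((b : ℝ) - a + 1) / (2 * H) := by gcongr; linarith
    _ ≤ _ := by gcongr
end

section
/- Let n ≥ 2 and let d₁ ≤ d₂ ≤ … ≤ d_n be a nondecreasing sequence of positive integers with d₁ ≤ n − 1. Define the reduced sequence (d′₂, …, d′_n) by d′_i = d_i − 1 for the d₁ largest indices i (i.e., for n − d₁ + 1 ≤ i ≤ n) and d′_i = d_i for 2 ≤ i ≤ n − d₁. Then (d₁, …, d_n) is graphical if and only if (d′₂, …, d′_n) is graphical. -/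
/-!
The equivalence is proved for labelled graphs: a sequence indexed by `Fin n` is graphical iff some
graph on `Fin n` realises it label by label (`graphical_iff`).

If the reduced sequence is realised by `H`, adding a vertex adjacent to exactly the last `d 0`
vertices realises `d`. Conversely, it suffices to find a realisation of `d` in which the
neighbourhood of vertex `0` is exactly the set `S` of the last `d 0` vertices, since deleting `0`
then leaves a realisation of the reduced sequence. Such a realisation is reached by edge
switching: as long as some `x ∈ S` is not adjacent to `0`, some `y ∉ S` is, and `d y ≤ d x` gives
a vertex `z ≠ y` adjacent to `x` but not to `y`. Replacing the edges `0y`, `xz` by `0x`, `yz`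
preserves all degrees and enlarges the part of `S` adjacent to `0` (`exists_switch`,
`exists_neighborFinset_eq`).
-/

open scoped Classical in
/-- A multiset `s` of natural numbers is graphical if there is a finite simple
graph whose multiset of vertex degrees equals `s`. -/
def Graphical (s : Multiset ℕ) : Prop :=
  ∃ (k : ℕ) (G : SimpleGraph (Fin k)),
    (Finset.univ.val.map fun v => G.degree v) = s

/-- Two finite families with the same multiset of values differ by a relabelling: their fibres
have equal cardinalities. -/
theorem exists_equiv_of_map_univ_eq {α β γ : Type*} [Fintype α] [Fintype β]
    {f : α → γ} {g : β → γ} (h : Finset.univ.val.map f = Finset.univ.val.map g) :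
    ∃ e : α ≃ β, ∀ a, g (e a) = f a := by
  classical
  have hc : ∀ c, Nonempty ({a // f a = c} ≃ {b // g b = c}) := by
    intro c
    have h1 := congrArg (Multiset.count c) h
    simp only [Multiset.count_map, ← Finset.filter_val, Finset.card_val] at h1
    refine ⟨Fintype.equivOfCardEq ?_⟩
    rw [Fintype.card_subtype, Fintype.card_subtype]
    simpa only [eq_comm] using h1
  exact ⟨Equiv.ofFiberEquiv fun c => (hc c).some, Equiv.ofFiberEquiv_map _⟩

open scoped Classical in
theorem graphical_iff {n : ℕ} (d : Fin n → ℕ) :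
    Graphical (Finset.univ.val.map d) ↔
      ∃ G : SimpleGraph (Fin n), ∀ v, G.degree v = d v := by
  constructor
  · rintro ⟨k, G, h⟩
    obtain ⟨σ, hσ⟩ := exists_equiv_of_map_univ_eq h
    refine ⟨G.comap σ.symm, fun v => ?_⟩
    have h1 := hσ (σ.symm v)
    rw [Equiv.apply_symm_apply] at h1
    rw [h1]
    exact ((SimpleGraph.Iso.comap σ.symm G).degree_eq v).symm
  · rintro ⟨G, h⟩
    exact ⟨n, G, by simp [h]⟩

/-- The graph obtained from `G` by deleting the edges `ay`, `xz` and adding the edges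
`ax`, `yz`. -/
def switchGraph {V : Type*} (G : SimpleGraph V) (a x y z : V) : SimpleGraph V :=
  (G.deleteEdges {s(a, y), s(x, z)}) ⊔ SimpleGraph.fromEdgeSet {s(a, x), s(y, z)}

open scoped Classical in
/-- The switching step: it preserves all degrees and replaces `y` by `x` in the neighbourhood
of `a`. -/
theorem exists_switch {V : Type*} [Fintype V] (G : SimpleGraph V) (a x y : V)
    (hxa : x ≠ a) (hx : ¬ G.Adj a x) (hy : G.Adj a y) (hd : G.degree y ≤ G.degree x) :
    ∃ G' : SimpleGraph V, (∀ v, G'.degree v = G.degree v) ∧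
      G'.neighborFinset a = insert x ((G.neighborFinset a).erase y) := by
  have hxy : x ≠ y := by rintro rfl; exact hx hy
  have hya : y ≠ a := hy.ne'
  obtain ⟨z, hxz, hzy, hyz⟩ : ∃ z, G.Adj x z ∧ z ≠ y ∧ ¬ G.Adj y z := by
    by_contra! hcon
    -- Otherwise `N(x) \ {y}` is contained in `N(y) \ {x, a}`, which is too small.
    have hsub : (G.neighborFinset x).erase y ⊆ ((G.neighborFinset y).erase x).erase a := by
      intro z hz
      simp only [Finset.mem_erase, SimpleGraph.mem_neighborFinset] at hz ⊢
      refine ⟨?_, hz.2.ne', hcon z hz.2 hz.1⟩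
      rintro rfl
      exact hx hz.2.symm
    have hcard := Finset.card_le_card hsub
    have ha : a ∈ (G.neighborFinset y).erase x := by
      simp [hxa.symm, hy.symm]
    rw [Finset.card_erase_of_mem ha] at hcard
    have hpos := Finset.card_pos.2 ⟨a, ha⟩
    simp only [Finset.card_erase_eq_ite, SimpleGraph.mem_neighborFinset,
      SimpleGraph.card_neighborFinset_eq_degree, G.adj_comm y x] at hcard hpos
    split_ifs at hcard hpos <;> omega
  have hza : z ≠ a := by rintro rfl; exact hx hxz.symm
  have hzx : z ≠ x := hxz.ne'
  have hadj : ∀ u v, (switchGraph G a x y z).Adj u v ↔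
      (G.Adj u v ∧ ¬ (a = u ∧ y = v ∨ a = v ∧ y = u) ∧ ¬ (x = u ∧ z = v ∨ x = v ∧ z = u)) ∨
      (a = u ∧ x = v ∨ a = v ∧ x = u) ∨ (y = u ∧ z = v ∨ y = v ∧ z = u) := by
    intro u v
    simp only [switchGraph, SimpleGraph.sup_adj, SimpleGraph.deleteEdges_adj,
      SimpleGraph.fromEdgeSet_adj, Set.mem_insert_iff, Set.mem_singleton_iff, Sym2.eq_iff]
    grind
  -- At each of the four vertices one neighbour is exchanged for a non-neighbour.
  have hswap : ∀ u p q, G.Adj u p → ¬ G.Adj u q →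
      (switchGraph G a x y z).neighborFinset u = insert q ((G.neighborFinset u).erase p) →
      (switchGraph G a x y z).degree u = G.degree u := by
    intro u p q hp hq h
    rw [← SimpleGraph.card_neighborFinset_eq_degree, h, Finset.card_insert_of_notMem (by simp [hq]),
      Finset.card_erase_add_one (by simpa using hp), SimpleGraph.card_neighborFinset_eq_degree]
  have hNa : (switchGraph G a x y z).neighborFinset a
      = insert x ((G.neighborFinset a).erase y) := by
    ext v
    simp only [SimpleGraph.mem_neighborFinset, hadj, Finset.mem_insert, Finset.mem_erase]
    grind
  refine ⟨switchGraph G a x y z, fun v => ?_, hNa⟩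
  by_cases hva : v = a
  · subst hva
    exact hswap _ y x hy hx hNa
  by_cases hvx : v = x
  · subst hvx
    refine hswap _ z a hxz (fun h => hx h.symm) ?_
    ext w
    simp only [SimpleGraph.mem_neighborFinset, hadj, Finset.mem_insert, Finset.mem_erase]
    grind
  by_cases hvy : v = y
  · subst hvy
    refine hswap _ a z hy.symm hyz ?_
    ext w
    simp only [SimpleGraph.mem_neighborFinset, hadj, Finset.mem_insert, Finset.mem_erase]
    grind
  by_cases hvz : v = z
  · subst hvz
    refine hswap _ x y hxz.symm (fun h => hyz h.symm) ?_
    ext w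
    simp only [SimpleGraph.mem_neighborFinset, hadj, Finset.mem_insert, Finset.mem_erase]
    grind
  · rw [← SimpleGraph.card_neighborFinset_eq_degree, ← SimpleGraph.card_neighborFinset_eq_degree]
    congr 1
    ext w
    simp only [SimpleGraph.mem_neighborFinset, hadj]
    grind

open scoped Classical in
/-- Given a set `S` of `deg a` vertices other than `a`, each of degree at least that of every
vertex outside `S ∪ {a}`, some graph with the same degrees has `S` as the neighbourhood
of `a`. -/
theorem exists_neighborFinset_eq {V : Type*} [Fintype V] (d : V → ℕ) (a : V) (S : Finset V)
    (haS : a ∉ S) (hS : S.card = d a) (hd : ∀ x ∈ S, ∀ y, y ∉ S → y ≠ a → d y ≤ d x)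
    (k : ℕ) (G : SimpleGraph V) (hG : ∀ v, G.degree v = d v)
    (hk : (S \ G.neighborFinset a).card = k) :
    ∃ G' : SimpleGraph V, (∀ v, G'.degree v = d v) ∧ G'.neighborFinset a = S := by
  have hcard : (G.neighborFinset a).card = S.card := by
    rw [SimpleGraph.card_neighborFinset_eq_degree, hG, hS]
  induction k generalizing G with
  | zero =>
    refine ⟨G, hG, (Finset.eq_of_subset_of_card_le ?_ hcard.le).symm⟩
    exact Finset.sdiff_eq_empty_iff_subset.1 (Finset.card_eq_zero.1 hk)
  | succ k ih =>
    obtain ⟨x, hx⟩ := Finset.card_pos.1 (by omega : 0 < (S \ G.neighborFinset a).card)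
    have hk' : (G.neighborFinset a \ S).card = k + 1 := by
      rw [← hk]; exact Finset.card_sdiff_comm hcard
    obtain ⟨y, hy⟩ := Finset.card_pos.1 (by omega : 0 < (G.neighborFinset a \ S).card)
    have hx' := hx
    simp only [Finset.mem_sdiff, SimpleGraph.mem_neighborFinset] at hx' hy
    obtain ⟨G', hdeg, hN⟩ := exists_switch G a x y (by rintro rfl; exact haS hx'.1) hx'.2 hy.1
      (by rw [hG, hG]; exact hd x hx'.1 y hy.2 hy.1.ne')
    refine ih G' (fun v => by rw [hdeg, hG]) ?_ ?_
    · have : S \ G'.neighborFinset a = (S \ G.neighborFinset a).erase x := by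
        rw [hN]
        ext w
        simp only [Finset.mem_sdiff, Finset.mem_insert, Finset.mem_erase]
        grind
      rw [this, Finset.card_erase_of_mem hx, hk]
      rfl
    · rw [SimpleGraph.card_neighborFinset_eq_degree, hdeg, hG, hS]

open scoped Classical in
theorem degree_eq_sum_ite {V : Type*} [Fintype V] (G : SimpleGraph V) (v : V) :
    G.degree v = ∑ w, if G.Adj v w then 1 else 0 := by
  rw [← SimpleGraph.card_neighborFinset_eq_degree, SimpleGraph.neighborFinset_eq_filter,
    Finset.card_filter]

/-- The graph `H` with a new vertex `0` joined to the vertices satisfying `P`; the old vertices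
are shifted by `Fin.succ`. -/
def coneGraph {m : ℕ} (H : SimpleGraph (Fin m)) (P : Fin m → Prop) :
    SimpleGraph (Fin (m + 1)) where
  Adj u v := Fin.cases (Fin.cases False P v) (fun a => Fin.cases (P a) (fun b => H.Adj a b) v) u
  symm := ⟨by
    intro u v
    cases u using Fin.cases <;> cases v using Fin.cases <;> simp [SimpleGraph.adj_comm]⟩
  loopless := ⟨by
    intro u
    cases u using Fin.cases <;> simp⟩

theorem card_last {m k : ℕ} (hk : k ≤ m) :
    (Finset.univ.filter fun j : Fin m => m + 1 - k ≤ j.1 + 1).card = k := by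
  have h := Finset.card_filter_add_card_filter_not (s := (Finset.univ : Finset (Fin m)))
    (fun j => j.1 < m - k)
  rw [Fin.card_filter_val_lt, Finset.card_univ, Fintype.card_fin] at h
  have h2 : (Finset.univ.filter fun j : Fin m => m + 1 - k ≤ j.1 + 1)
      = Finset.univ.filter fun j : Fin m => ¬ j.1 < m - k := by
    ext j
    simp only [Finset.mem_filter, Finset.mem_univ, true_and]
    omega
  rw [h2]
  omega

/-- Havel–Hakimi: let `n ≥ 2` and let `d₁ ≤ … ≤ dₙ` be positive integers with
`d₁ ≤ n − 1` (here `d : Fin n → ℕ` is the 0-indexed sequence, so `d₁ = d 0`).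
Form the reduced sequence on the remaining `n − 1` entries by decrementing the
`d₁` largest entries (the last `d₁` of them) and keeping the others. Then the
original sequence is graphical iff the reduced sequence is graphical. -/
theorem stmt17 (n : ℕ) (hn : 2 ≤ n) (d : Fin n → ℕ) (hmono : Monotone d)
    (hpos : ∀ i, 1 ≤ d i) (hd1 : d ⟨0, by omega⟩ ≤ n - 1) :
    Graphical (Finset.univ.val.map d) ↔
    Graphical (Finset.univ.val.map fun j : Fin (n - 1) =>
      if n - d ⟨0, by omega⟩ ≤ j.1 + 1 then
        d ⟨j.1 + 1, by have := j.isLt; omega⟩ - 1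
      else
        d ⟨j.1 + 1, by have := j.isLt; omega⟩) := by
  classical
  obtain ⟨m, rfl⟩ : ∃ m, n = m + 1 := ⟨n - 1, by omega⟩
  rw [graphical_iff, graphical_iff]
  change d 0 ≤ m at hd1
  change _ ↔ ∃ H : SimpleGraph (Fin m), ∀ j : Fin m, H.degree j =
    if m + 1 - d 0 ≤ j.1 + 1 then d j.succ - 1 else d j.succ
  have hlast := card_last hd1
  constructor
  · rintro ⟨G, hG⟩
    obtain ⟨G', hdeg, hN⟩ := exists_neighborFinset_eq d 0
      ((Finset.univ.filter fun j : Fin m => m + 1 - d 0 ≤ j.1 + 1).map (Fin.succEmb m))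
      (by simp [Fin.succ_ne_zero]) (by rw [Finset.card_map, hlast])
      (by
        intro x hx y hy hy0
        apply hmono
        obtain ⟨y, rfl⟩ := Fin.exists_succ_eq.2 hy0
        simp only [Finset.mem_map, Finset.mem_filter, Finset.mem_univ, true_and] at hx hy
        obtain ⟨x, hx, rfl⟩ := hx
        have hy' : ¬ (m + 1 - d 0 ≤ y.1 + 1) := fun h => hy ⟨y, h, rfl⟩
        simp only [Fin.coe_succEmb, Fin.le_def, Fin.val_succ]
        omega)
      _ G hG rfl
    have hadj : ∀ j : Fin m, G'.Adj j.succ 0 ↔ m + 1 - d 0 ≤ j.1 + 1 := by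
      intro j
      rw [G'.adj_comm, ← SimpleGraph.mem_neighborFinset, hN]
      simp
    refine ⟨G'.comap Fin.succ, fun j => ?_⟩
    have h := hdeg j.succ
    rw [degree_eq_sum_ite, Fin.sum_univ_succ] at h
    simp only [hadj] at h
    rw [degree_eq_sum_ite]
    simp only [SimpleGraph.comap_adj]
    split_ifs at h ⊢ <;> omega
  · rintro ⟨H, hH⟩
    refine ⟨coneGraph H fun j => m + 1 - d 0 ≤ j.1 + 1, fun v => ?_⟩
    rw [degree_eq_sum_ite, Fin.sum_univ_succ]
    cases v using Fin.cases with
    | zero =>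
      rw [Finset.card_filter] at hlast
      simpa [coneGraph] using hlast
    | succ j =>
      have h := hH j
      have hp := hpos j.succ
      rw [degree_eq_sum_ite] at h
      have h0 : (coneGraph H fun j => m + 1 - d 0 ≤ j.1 + 1).Adj j.succ 0 ↔
          m + 1 - d 0 ≤ j.1 + 1 := Iff.rfl
      have h1 : ∀ i, (coneGraph H fun j => m + 1 - d 0 ≤ j.1 + 1).Adj j.succ i.succ ↔
          H.Adj j i := fun i => Iff.rfl
      simp only [h0, h1, h]
      split_ifs <;> omega
end
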